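/- arXiv:1408.0110 — 4 statements merged into one kernel-verified Lean document; each statement's English description precedes it below -/
import Mathlib

section
/- Let μ be a probability measure on [0,∞) × [0,∞), let γ : ℝ → ℝ, and let EC > 0. Assume that for all ω_P, ω_R ≥ 0 with ω_P ≠ ω_R, ∫ e^{−ω_P t − ω_R u} dμ(t,u) = (γ(ω_P) − γ(ω_R)) / ((ω_R − ω_P)·EC). Let λ_H, λ_L ≥ 0, ω > 0, and b_H, b_L ∈ [0,1] with ω ≠ λ_L(1 − b_L). Then ∫ [ ∑_{m=0}^∞ ∑_{n=0}^∞ b_H^m · b_L^n · e^{−ωu} · ((λ_H(t+u))^m / m!) · e^{−λ_H(t+u)} · ((λ_L t)^n / n!) · e^{−λ_L t} ] dμ(t,u) = (γ(λ_H(1−b_H) + λ_L(1−b_L)) − γ(ω + λ_H(1−b_H))) / ((ω − λ_L(1−b_L))·EC). -/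
open MeasureTheory

/-!
For fixed `(t, u)` each Poisson sum is a probability generating function, equal to
`exp (-x (1 - b))`, so the integrand is `exp (-ωP t - ωR u)` with
`ωP = lH (1 - bH) + lL (1 - bL)` and `ωR = ω + lH (1 - bH)`. Both parameters are nonnegative, and
they are distinct because `ωR - ωP = ω - lL (1 - bL)`; the joint transform identity at `(ωP, ωR)`
is the claim.
-/

lemma hasSum_pow_mul_poisson (b x : ℝ) :
    HasSum (fun n : ℕ ↦ b ^ n * (x ^ n / n.factorial * Real.exp (-x)))
      (Real.exp (-(x * (1 - b)))) := by
  have hexp : HasSum (fun n : ℕ ↦ (b * x) ^ n / n.factorial) (Real.exp (b * x)) := by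
    rw [Real.exp_eq_exp_ℝ]
    exact NormedSpace.expSeries_div_hasSum_exp (b * x)
  convert! hexp.mul_right (Real.exp (-x)) using 1
  · ext n
    ring
  · rw [← Real.exp_add]
    ring_nf

lemma tsum_tsum_pow_mul_poisson (a b c x y : ℝ) :
    ∑' (m : ℕ), ∑' (n : ℕ), a ^ m * b ^ n * c * (x ^ m / m.factorial) * Real.exp (-x)
        * (y ^ n / n.factorial) * Real.exp (-y)
      = c * Real.exp (-(x * (1 - a))) * Real.exp (-(y * (1 - b))) :=
  calc
    _ = ∑' (m : ℕ), ∑' (n : ℕ), c * (a ^ m * (x ^ m / m.factorial * Real.exp (-x)))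
          * (b ^ n * (y ^ n / n.factorial * Real.exp (-y))) :=
      tsum_congr fun m ↦ tsum_congr fun n ↦ by ring
    _ = _ := by
      simp only [tsum_mul_left, tsum_mul_right, (hasSum_pow_mul_poisson _ _).tsum_eq]

lemma tsum_tsum_poisson_mul_exp (lH lL ω bH bL t u : ℝ) :
    ∑' (m : ℕ), ∑' (n : ℕ),
        bH ^ m * bL ^ n * Real.exp (-ω * u)
          * ((lH * (t + u)) ^ m / m.factorial) * Real.exp (-(lH * (t + u)))
          * ((lL * t) ^ n / n.factorial) * Real.exp (-(lL * t))
      = Real.exp (-(lH * (1 - bH) + lL * (1 - bL)) * t - (ω + lH * (1 - bH)) * u) := by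
  rw [tsum_tsum_pow_mul_poisson, ← Real.exp_add, ← Real.exp_add]
  ring_nf

theorem stmt_2_general {Ω : Type*} [MeasurableSpace Ω] (μ : Measure Ω) (T U : Ω → ℝ)
    (γ : ℝ → ℝ) (EC : ℝ) (hEC : EC ≠ 0)
    (hμ : ∀ ωP ωR : ℝ, 0 ≤ ωP → 0 ≤ ωR → ωP ≠ ωR →
      ∫ x, Real.exp (-ωP * T x - ωR * U x) ∂μ = (γ ωP - γ ωR) / ((ωR - ωP) * EC))
    (lH lL ω bH bL : ℝ) (hP : 0 ≤ lH * (1 - bH) + lL * (1 - bL)) (hR : 0 ≤ ω + lH * (1 - bH))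
    (hne : ω ≠ lL * (1 - bL)) :
    ∫ x, (∑' (m : ℕ), ∑' (n : ℕ),
        bH ^ m * bL ^ n * Real.exp (-ω * U x)
          * ((lH * (T x + U x)) ^ m / m.factorial) * Real.exp (-(lH * (T x + U x)))
          * ((lL * T x) ^ n / n.factorial) * Real.exp (-(lL * T x))) ∂μ
      = (γ (lH * (1 - bH) + lL * (1 - bL)) - γ (ω + lH * (1 - bH)))
          / ((ω - lL * (1 - bL)) * EC) := by
  have hPR : lH * (1 - bH) + lL * (1 - bL) ≠ ω + lH * (1 - bH) := fun h ↦ hne (by linarith)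
  simp only [tsum_tsum_poisson_mul_exp]
  rw [hμ _ _ hP hR hPR]
  congr 2
  ring

/-- The gated waiting-time LST of a low-priority customer: integrating the double
Poisson series against the joint law of past and residual cycle time. -/
theorem stmt_2 (μ : Measure (ℝ × ℝ)) [IsProbabilityMeasure μ]
    (hsupp : ∀ᵐ p ∂μ, 0 ≤ p.1 ∧ 0 ≤ p.2)
    (γ : ℝ → ℝ) (EC : ℝ) (hEC : 0 < EC)
    (hμ : ∀ ωP ωR : ℝ, 0 ≤ ωP → 0 ≤ ωR → ωP ≠ ωR →
      ∫ p, Real.exp (-ωP * p.1 - ωR * p.2) ∂μ = (γ ωP - γ ωR) / ((ωR - ωP) * EC))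
    (lH lL ω bH bL : ℝ) (hlH : 0 ≤ lH) (hlL : 0 ≤ lL) (hω : 0 < ω)
    (hbH : bH ∈ Set.Icc (0 : ℝ) 1) (hbL : bL ∈ Set.Icc (0 : ℝ) 1)
    (hne : ω ≠ lL * (1 - bL)) :
    ∫ p, (∑' (m : ℕ), ∑' (n : ℕ),
        bH ^ m * bL ^ n * Real.exp (-ω * p.2)
          * ((lH * (p.1 + p.2)) ^ m / m.factorial) * Real.exp (-(lH * (p.1 + p.2)))
          * ((lL * p.1) ^ n / n.factorial) * Real.exp (-(lL * p.1))) ∂μ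
      = (γ (lH * (1 - bH) + lL * (1 - bL)) - γ (ω + lH * (1 - bH)))
          / ((ω - lL * (1 - bL)) * EC) := by
  have hH : 0 ≤ lH * (1 - bH) := mul_nonneg hlH (sub_nonneg.2 hbH.2)
  have hL : 0 ≤ lL * (1 - bL) := mul_nonneg hlL (sub_nonneg.2 hbL.2)
  exact stmt_2_general μ Prod.fst Prod.snd γ EC hEC.ne' hμ lH lL ω bH bL (add_nonneg hH hL)
    (add_nonneg hω.le hH) hne
end

section
/- Let λ > 0, EB > 0, EB2 ≥ 0, EC > 0, EC2 ≥ 0, and ρ = λ·EB with ρ < 1. Let β, γ : ℝ → ℝ satisfy the second-order expansions (β(ω) − (1 − EB·ω + EB2·ω²/2))/ω² → 0 and (γ(ω) − (1 − EC·ω + EC2·ω²/2))/ω² → 0 as ω → 0⁺. Then (1/ω)·(1 − (γ(λ(1 − β(ω))) − γ(ω)) / ((ω − λ(1 − β(ω)))·EC)) → (1 + ρ)·EC2/(2·EC) as ω → 0⁺. -/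
open Filter

/-!
With `u ω = λ (1 - β ω)`, the subtracted quotient is `-1 / E(C)` times the slope of `γ` between `ω`
and `u ω`. The slope of a quadratic polynomial `a + b x + c x ^ 2` between `x` and `y` is
`b + (x + y) c`. As long as `u ω / ω → ρ ≠ 1`, the two points are a distance of order `ω` apart, so
an `o(ω ^ 2)` remainder contributes only `o(ω)` to the slope. The slope is therefore
`-E(C) + (1 + ρ) ω E(C²) / 2 + o(ω)`.
-/

section QuadraticExpansion

open Asymptotics Topology

theorem slope_quadratic {k M : Type*} [Field k] [AddCommGroup M] [Module k M] (a b c : M)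
    {x y : k} (hxy : x ≠ y) :
    slope (fun z ↦ a + z • b + z ^ 2 • c) x y = b + (x + y) • c := by
  have factor : a + y • b + y ^ 2 • c - (a + x • b + x ^ 2 • c) =
      (y - x) • (b + (x + y) • c) := by
    module
  rw [slope_def_module, factor, inv_smul_smul₀ (sub_ne_zero.2 hxy.symm)]

theorem tendsto_nhdsGT_zero_of_tendsto_div {k : Type*} [Field k] [LinearOrder k]
    [IsStrictOrderedRing k] [TopologicalSpace k] [OrderTopology k] {u : k → k} {r : k}
    (hr0 : 0 < r) (hr : Tendsto (fun x ↦ u x / x) (𝓝[>] 0) (𝓝 r)) :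
    Tendsto u (𝓝[>] 0) (𝓝[>] 0) := by
  have hx0 : Tendsto (fun x : k ↦ x) (𝓝[>] 0) (𝓝 0) := nhdsWithin_le_nhds
  have u_lim := hr.mul hx0
  rw [mul_zero] at u_lim
  refine tendsto_nhdsWithin_iff.2 ⟨u_lim.congr' ?_, ?_⟩
  · filter_upwards [self_mem_nhdsWithin] with x (hx : 0 < x)
    exact div_mul_cancel₀ _ hx.ne'
  · filter_upwards [self_mem_nhdsWithin, hr.eventually_const_lt hr0] with x (hx : 0 < x) hux
    exact (div_pos_iff_of_pos_right hx).1 hux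

theorem eventually_ne_of_tendsto_div {α k : Type*} [Field k] [TopologicalSpace k] [T1Space k]
    {l : Filter α} {u v : α → k} {r : k} (hv : ∀ᶠ x in l, v x ≠ 0)
    (hr : Tendsto (fun x ↦ u x / v x) l (𝓝 r)) (hr1 : r ≠ 1) : ∀ᶠ x in l, v x ≠ u x := by
  filter_upwards [hv, hr.eventually_ne hr1] with x hvx hux heq
  exact hux (by rw [← heq, div_self hvx])

theorem isBigO_sub_of_tendsto_div {α k : Type*} [NormedField k] {l : Filter α} {u v : α → k}
    {r : k} (hv : ∀ᶠ x in l, v x ≠ 0) (hr : Tendsto (fun x ↦ u x / v x) l (𝓝 r))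
    (hr1 : r ≠ 1) : v =O[l] fun x ↦ u x - v x := by
  refine isBigO_of_div_tendsto_nhds_of_ne_zero ?_ (sub_ne_zero.2 hr1)
  refine (hr.sub_const 1).congr' ?_
  filter_upwards [hv] with x hvx
  exact div_sub_one hvx

variable {𝕜 E : Type*} [NormedField 𝕜] [NormedAddCommGroup E] [NormedSpace 𝕜 E]
  {f : 𝕜 → E} {a b c : E} {l : Filter 𝕜} {u : 𝕜 → 𝕜} {r : 𝕜}

theorem isLittleO_slope {n : ℕ} (hf : f =o[l] fun x ↦ x ^ (n + 1)) (hl : ∀ᶠ x in l, x ≠ 0)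
    (hu : Tendsto u l l) (hr : Tendsto (fun x ↦ u x / x) l (𝓝 r)) (hr1 : r ≠ 1) :
    (fun x ↦ slope f x (u x)) =o[l] fun x ↦ x ^ n := by
  have u_isBigO : u =O[l] fun x ↦ x :=
    isBigO_of_div_tendsto_nhds (hl.mono fun x hx h ↦ absurd h hx) r hr
  have diff_isLittleO : (fun x ↦ f (u x) - f x) =o[l] fun x ↦ x ^ (n + 1) :=
    ((hf.comp_tendsto hu).trans_isBigO (u_isBigO.pow (n + 1))).sub hf
  have inv_isBigO : (fun x ↦ (u x - x)⁻¹) =O[l] fun x ↦ x⁻¹ :=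
    (isBigO_sub_of_tendsto_div hl hr hr1).inv_rev (hl.mono fun x hx h ↦ absurd h hx)
  simp only [slope_def_module]
  refine (inv_isBigO.smul_isLittleO diff_isLittleO).congr' .rfl ?_
  filter_upwards [hl] with x hx
  rw [smul_eq_mul, pow_succ', inv_mul_cancel_left₀ hx]

/-- The expansion `f x = a + x b + x ^ 2 c + o(x ^ 2)` along the filter `l`. The point of expansion
is always `0`; taking `l` as a parameter allows one-sided expansions and ignores the value `f 0`. -/
def HasQuadraticExpansion (f : 𝕜 → E) (a b c : E) (l : Filter 𝕜) : Prop :=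
  (fun x ↦ f x - (a + x • b + x ^ 2 • c)) =o[l] fun x ↦ x ^ 2

namespace HasQuadraticExpansion

theorem tendsto_inv_smul_sub (hf : HasQuadraticExpansion f a b c l) (hl : l ≤ 𝓝[≠] 0) :
    Tendsto (fun x ↦ x⁻¹ • (f x - a)) l (𝓝 b) := by
  have hx0 : Tendsto (fun x : 𝕜 ↦ x) l (𝓝 0) := hl.trans nhdsWithin_le_nhds
  have remainder : (fun x ↦ f x - (a + x • b + x ^ 2 • c)) =o[l] fun x ↦ x :=
    hf.trans <| (isLittleO_pow_id one_lt_two).mono hx0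
  have linear : Tendsto (fun x ↦ b + x • c) l (𝓝 b) := by
    simpa only [zero_smul, add_zero] using (hx0.smul_const c).const_add b
  have hlim := linear.add remainder.tendsto_inv_smul_nhds_zero
  rw [add_zero] at hlim
  refine hlim.congr' ?_
  filter_upwards [hl self_mem_nhdsWithin] with x (hx : x ≠ 0)
  match_scalars <;> field_simp <;> ring

theorem tendsto_inv_smul_slope_sub (hf : HasQuadraticExpansion f a b c l)
    (hl : ∀ᶠ x in l, x ≠ 0) (hu : Tendsto u l l)
    (hr : Tendsto (fun x ↦ u x / x) l (𝓝 r)) (hr1 : r ≠ 1) :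
    Tendsto (fun x ↦ x⁻¹ • (slope f x (u x) - b)) l (𝓝 ((1 + r) • c)) := by
  have remainder := isLittleO_slope (n := 1) hf hl hu hr hr1
  simp only [pow_one] at remainder
  have hlim := ((hr.const_add 1).smul_const c).add remainder.tendsto_inv_smul_nhds_zero
  rw [add_zero] at hlim
  refine hlim.congr' ?_
  filter_upwards [hl, eventually_ne_of_tendsto_div hl hr hr1] with x hx hxu
  have slope_eq : slope (fun z ↦ f z - (a + z • b + z ^ 2 • c)) x (u x) =
      slope f x (u x) - (b + (x + u x) • c) := by
    rw [← slope_quadratic a b c hxu]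
    simp only [slope_def_module]
    module
  rw [slope_eq]
  match_scalars
  all_goals field_simp
  ring

end HasQuadraticExpansion

theorem hasQuadraticExpansion_of_tendsto {φ : ℝ → ℝ} {m₁ m₂ : ℝ}
    (hφ : Tendsto (fun x ↦ (φ x - (1 - m₁ * x + m₂ * x ^ 2 / 2)) / x ^ 2) (𝓝[>] 0) (𝓝 0)) :
    HasQuadraticExpansion φ 1 (-m₁) (m₂ / 2) (𝓝[>] 0) := by
  refine isLittleO_of_tendsto' ?_ (hφ.congr fun x ↦ ?_)
  · filter_upwards [self_mem_nhdsWithin] with x (hx : 0 < x) h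
    exact absurd h (pow_pos hx 2).ne'
  · simp only [smul_eq_mul]
    ring

theorem tendsto_one_sub_div_of_tendsto {φ : ℝ → ℝ} {m₁ m₂ : ℝ}
    (hφ : Tendsto (fun x ↦ (φ x - (1 - m₁ * x + m₂ * x ^ 2 / 2)) / x ^ 2) (𝓝[>] 0) (𝓝 0)) :
    Tendsto (fun x ↦ (1 - φ x) / x) (𝓝[>] 0) (𝓝 m₁) := by
  have hlim := ((hasQuadraticExpansion_of_tendsto hφ).tendsto_inv_smul_sub
    (nhdsGT_le_nhdsNE 0)).neg
  rw [neg_neg] at hlim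
  refine hlim.congr fun x ↦ ?_
  rw [← smul_neg, neg_sub, smul_eq_mul, inv_mul_eq_div]

theorem stmt_12_general (lam EB EC EC2 ρ : ℝ) (hEC : EC ≠ 0)
    (hρ : ρ = lam * EB) (hρ0 : 0 < ρ) (hρ1 : ρ ≠ 1) (β γ : ℝ → ℝ)
    (hβ : Tendsto (fun ω ↦ (1 - β ω) / ω) (𝓝[>] 0) (𝓝 EB))
    (hγ : Tendsto (fun ω ↦ (γ ω - (1 - EC * ω + EC2 * ω ^ 2 / 2)) / ω ^ 2) (𝓝[>] 0) (𝓝 0)) :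
    Tendsto (fun ω ↦ (1 / ω) * (1 - (γ (lam * (1 - β ω)) - γ ω)
        / ((ω - lam * (1 - β ω)) * EC)))
      (𝓝[>] 0) (𝓝 ((1 + ρ) * EC2 / (2 * EC))) := by
  have ratio : Tendsto (fun ω ↦ lam * (1 - β ω) / ω) (𝓝[>] 0) (𝓝 ρ) := by
    simpa only [hρ, mul_div_assoc] using hβ.const_mul lam
  have ne_zero : ∀ᶠ ω : ℝ in 𝓝[>] 0, ω ≠ 0 := nhdsGT_le_nhdsNE 0 self_mem_nhdsWithin
  have slope_lim := (hasQuadraticExpansion_of_tendsto hγ).tendsto_inv_smul_slope_sub ne_zero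
    (tendsto_nhdsGT_zero_of_tendsto_div hρ0 ratio) ratio hρ1
  have quotient_eq (ω : ℝ) : 1 - (γ (lam * (1 - β ω)) - γ ω) / ((ω - lam * (1 - β ω)) * EC) =
      (slope γ ω (lam * (1 - β ω)) - -EC) / EC := by
    rw [slope_def_field, sub_neg_eq_add, add_div, div_self hEC, div_div, ← neg_sub _ ω, neg_mul,
      div_neg, sub_neg_eq_add, add_comm]
  have limit_eq : (1 + ρ) • (EC2 / 2) / EC = (1 + ρ) * EC2 / (2 * EC) := by
    rw [smul_eq_mul, mul_div_assoc', div_div]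
  rw [← limit_eq]
  refine (slope_lim.div_const EC).congr fun ω ↦ ?_
  rw [quotient_eq, smul_eq_mul, one_div, mul_div_assoc]

end QuadraticExpansion

/-- Equation (ewgated): the mean waiting time under gated service is
`(1+ρ)·E(C²)/(2E(C))`, obtained from the waiting-time LST at `ω → 0⁺`. -/
theorem stmt_12 (lam EB EB2 EC EC2 ρ : ℝ)
    (hlam : 0 < lam) (hEB : 0 < EB) (hEB2 : 0 ≤ EB2) (hEC : 0 < EC) (hEC2 : 0 ≤ EC2)
    (hρ : ρ = lam * EB) (hρlt : ρ < 1)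
    (β γ : ℝ → ℝ)
    (hβ : Tendsto (fun ω => (β ω - (1 - EB * ω + EB2 * ω ^ 2 / 2)) / ω ^ 2)
      (nhdsWithin 0 (Set.Ioi 0)) (nhds 0))
    (hγ : Tendsto (fun ω => (γ ω - (1 - EC * ω + EC2 * ω ^ 2 / 2)) / ω ^ 2)
      (nhdsWithin 0 (Set.Ioi 0)) (nhds 0)) :
    Tendsto (fun ω => (1 / ω) * (1 - (γ (lam * (1 - β ω)) - γ ω)
        / ((ω - lam * (1 - β ω)) * EC)))
      (nhdsWithin 0 (Set.Ioi 0)) (nhds ((1 + ρ) * EC2 / (2 * EC))) :=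
  stmt_12_general lam EB EC EC2 ρ hEC.ne' hρ (hρ ▸ mul_pos hlam hEB) hρlt.ne β γ
    (tendsto_one_sub_div_of_tendsto hβ) hγ
end

section
/- Let λ_H, λ_L, λ_2 > 0, EB_H, EB_L, EB_2 > 0, second moments EB_H2, EB_L2, EB_22 ≥ 0, ES_1 > 0, EC > 0, EC2 ≥ 0, ρ_H = λ_H·EB_H, ρ_L = λ_L·EB_L, ρ_2 = λ_2·EB_2 with ρ_2 < 1. Let β_H, β_L, β_2, γ, σ_1 : ℝ → ℝ satisfy the second-order expansions (β_i(ω) − (1 − EB_i·ω + EB_i2·ω²/2))/ω² → 0 for i ∈ {H, L, 2} and (γ(ω) − (1 − EC·ω + EC2·ω²/2))/ω² → 0 as ω → 0⁺, and the first-order expansion (σ_1(ω) − (1 − ES_1·ω))/ω → 0 as ω → 0⁺. Then (1/ω)·(1 − σ_1(ω)·(γ(λ_H(1−β_H(ω)) + λ_L(1−β_L(ω)) + λ_2(1−β_2(ω))) − γ(ω + λ_H(1−β_H(ω)) + λ_L(1−β_L(ω)))) / ((ω − λ_2(1 − β_2(ω)))·EC)) → ES_1 + (1 + 2ρ_H +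 2ρ_L + ρ_2)·EC2/(2·EC) as ω → 0⁺. -/
open Filter

/-!
The two arguments of `γ` differ by the denominator `ω - λ_2(1 - β_2(ω))`, so the fraction in the
transform is, up to the factor `-1/E(C)`, a slope of `γ` between two points tending to `0⁺`. By the
second-order expansion of `γ` this slope is `-E(C) + (E(C²)/2) (a + b)` up to `o(ω)`, where the two
points are `a ~ (ρ_H + ρ_L + ρ_2) ω` and `b ~ (1 + ρ_H + ρ_L) ω`; hence only the first moments of
the service times enter. The switch-over time contributes additively, by the product rule.
-/

open Asymptotics Topology

section Ratio

variable {ι : Type*} {l : Filter ι} {t : ι → ℝ}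

lemma tendsto_nhdsGT_zero_of_tendsto_div_s16 {a : ι → ℝ} {α : ℝ} (ht : Tendsto t l (𝓝[>] 0))
    (hα : 0 < α) (ha : Tendsto (fun i => a i / t i) l (𝓝 α)) : Tendsto a l (𝓝[>] 0) := by
  obtain ⟨ht_zero, ht_pos⟩ := tendsto_nhdsWithin_iff.1 ht
  refine tendsto_nhdsWithin_iff.2 ⟨?_, ?_⟩
  · rw [← mul_zero α]
    refine (ha.mul ht_zero).congr' ?_
    filter_upwards [ht_pos] with i hi using div_mul_cancel₀ _ (ne_of_gt hi)
  · filter_upwards [ht_pos, ha.eventually_const_lt hα] with i hi hai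
    exact (div_pos_iff_of_pos_right hi).1 hai

lemma tendsto_comp_div_pow_of_isLittleO {a : ι → ℝ} {α : ℝ} {r : ℝ → ℝ} {n : ℕ}
    (ht : Tendsto t l (𝓝[>] 0)) (hα : 0 < α) (ha : Tendsto (fun i => a i / t i) l (𝓝 α))
    (hr : r =o[𝓝[>] 0] fun x => x ^ n) :
    Tendsto (fun i => r (a i) / t i ^ n) l (𝓝 0) := by
  have ht_pos : ∀ᶠ i in l, 0 < t i := (tendsto_nhdsWithin_iff.1 ht).2
  have haO : a =O[l] t :=
    isBigO_of_div_tendsto_nhds (ht_pos.mono fun i hi h => absurd h hi.ne') α ha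
  have hra : (fun i => r (a i)) =o[l] fun i => a i ^ n :=
    hr.comp_tendsto (tendsto_nhdsGT_zero_of_tendsto_div_s16 ht hα ha)
  exact (hra.trans_isBigO (haO.pow n)).tendsto_div_nhds_zero

lemma tendsto_slope_sub_div {a b : ι → ℝ} {α β c₀ c₁ c₂ : ℝ} {f : ℝ → ℝ}
    (ht : Tendsto t l (𝓝[>] 0)) (hα : 0 < α) (hβ : 0 < β) (hαβ : α ≠ β)
    (ha : Tendsto (fun i => a i / t i) l (𝓝 α)) (hb : Tendsto (fun i => b i / t i) l (𝓝 β))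
    (hf : (fun x => f x - (c₀ + c₁ * x + c₂ * x ^ 2)) =o[𝓝[>] 0] fun x => x ^ 2) :
    Tendsto (fun i => (slope f (a i) (b i) - c₁) / t i) l (𝓝 (c₂ * (α + β))) := by
  set r : ℝ → ℝ := fun x => f x - (c₀ + c₁ * x + c₂ * x ^ 2) with hr
  have hra := tendsto_comp_div_pow_of_isLittleO ht hα ha hf
  have hrb := tendsto_comp_div_pow_of_isLittleO ht hβ hb hf
  have hba : Tendsto (fun i => b i / t i - a i / t i) l (𝓝 (β - α)) := hb.sub ha
  have hβα : β - α ≠ 0 := sub_ne_zero.2 hαβ.symm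
  have hremainder : Tendsto
      (fun i => (r (b i) / t i ^ 2 - r (a i) / t i ^ 2) / (b i / t i - a i / t i)) l (𝓝 0) := by
    simpa only [Pi.div_def, sub_zero, zero_div] using (hrb.sub hra).div hba hβα
  have hsum : Tendsto (fun i => c₂ * (a i / t i + b i / t i) +
      (r (b i) / t i ^ 2 - r (a i) / t i ^ 2) / (b i / t i - a i / t i)) l
      (𝓝 (c₂ * (α + β))) := by
    simpa only [add_zero] using ((ha.add hb).const_mul c₂).add hremainder
  refine hsum.congr' ?_
  filter_upwards [(tendsto_nhdsWithin_iff.1 ht).2, hba.eventually_ne hβα] with i hti hne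
  have hti : t i ≠ 0 := ne_of_gt hti
  have hne : b i - a i ≠ 0 := by
    rw [← sub_div] at hne
    exact (div_ne_zero_iff.1 hne).1
  rw [slope_def_field, ← sub_div (b i)]
  simp only [hr]
  field_simp
  ring

lemma tendsto_one_sub_mul_div {f g : ι → ℝ} {m n : ℝ} (ht : Tendsto t l (𝓝 0))
    (hf : Tendsto (fun i => (1 - f i) / t i) l (𝓝 m))
    (hg : Tendsto (fun i => (1 - g i) / t i) l (𝓝 n)) :
    Tendsto (fun i => (1 - f i * g i) / t i) l (𝓝 (m + n)) := by
  have hsum := (hf.add hg).sub (ht.mul (hf.mul hg))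
  rw [zero_mul, sub_zero] at hsum
  refine hsum.congr fun i => ?_
  rcases eq_or_ne (t i) 0 with hti | hti
  · simp only [hti, div_zero, add_zero, mul_zero, sub_zero]
  · field_simp
    ring

end Ratio

section Expansion

variable {f : ℝ → ℝ} {m m₂ : ℝ}

lemma tendsto_one_sub_div_of_firstOrder
    (hf : Tendsto (fun ω => (f ω - (1 - m * ω)) / ω) (𝓝[>] 0) (𝓝 0)) :
    Tendsto (fun ω => (1 - f ω) / ω) (𝓝[>] 0) (𝓝 m) := by
  rw [← sub_zero m]
  refine (hf.const_sub m).congr' ?_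
  filter_upwards [self_mem_nhdsWithin] with ω hω
  have hω : ω ≠ 0 := ne_of_gt hω
  field_simp
  ring

lemma tendsto_one_sub_div_of_secondOrder
    (hf : Tendsto (fun ω => (f ω - (1 - m * ω + m₂ * ω ^ 2 / 2)) / ω ^ 2) (𝓝[>] 0) (𝓝 0)) :
    Tendsto (fun ω => (1 - f ω) / ω) (𝓝[>] 0) (𝓝 m) := by
  refine tendsto_one_sub_div_of_firstOrder ?_
  have hid : Tendsto (fun ω : ℝ => ω) (𝓝[>] 0) (𝓝 0) := tendsto_id'.2 nhdsWithin_le_nhds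
  have hmul := hid.mul (hf.add_const (m₂ / 2))
  rw [zero_mul] at hmul
  refine hmul.congr' ?_
  filter_upwards [self_mem_nhdsWithin] with ω hω
  have hω : ω ≠ 0 := ne_of_gt hω
  field_simp
  ring

lemma tendsto_mul_one_sub_div_of_secondOrder (c : ℝ)
    (hf : Tendsto (fun ω => (f ω - (1 - m * ω + m₂ * ω ^ 2 / 2)) / ω ^ 2) (𝓝[>] 0) (𝓝 0)) :
    Tendsto (fun ω => c * (1 - f ω) / ω) (𝓝[>] 0) (𝓝 (c * m)) := by
  simpa only [mul_div_assoc] using (tendsto_one_sub_div_of_secondOrder hf).const_mul c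

lemma isLittleO_of_secondOrder
    (hf : Tendsto (fun ω => (f ω - (1 - m * ω + m₂ * ω ^ 2 / 2)) / ω ^ 2) (𝓝[>] 0) (𝓝 0)) :
    (fun ω => f ω - (1 + -m * ω + m₂ / 2 * ω ^ 2)) =o[𝓝[>] 0] fun ω => ω ^ 2 := by
  refine isLittleO_of_tendsto' ?_ (hf.congr fun ω => by ring)
  filter_upwards [self_mem_nhdsWithin] with ω hω h
  exact absurd h (pow_ne_zero 2 (ne_of_gt hω))

end Expansion

lemma tendsto_one_sub_gated_div {γ u v : ℝ → ℝ} {m m₂ ρ ρ' : ℝ} (hm : m ≠ 0) (hρ : 0 < 1 + ρ)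
    (hρρ' : 0 < ρ + ρ') (hρ' : ρ' ≠ 1)
    (hu : Tendsto (fun ω => u ω / ω) (𝓝[>] 0) (𝓝 ρ))
    (hv : Tendsto (fun ω => v ω / ω) (𝓝[>] 0) (𝓝 ρ'))
    (hγ : Tendsto (fun ω => (γ ω - (1 - m * ω + m₂ * ω ^ 2 / 2)) / ω ^ 2) (𝓝[>] 0) (𝓝 0)) :
    Tendsto (fun ω => (1 - (γ (u ω + v ω) - γ (ω + u ω)) / ((ω - v ω) * m)) / ω) (𝓝[>] 0)
      (𝓝 ((1 + 2 * ρ + ρ') * m₂ / (2 * m))) := by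
  have ha : Tendsto (fun ω => (u ω + v ω) / ω) (𝓝[>] 0) (𝓝 (ρ + ρ')) :=
    (hu.add hv).congr fun ω => (add_div _ _ _).symm
  have hb : Tendsto (fun ω => (ω + u ω) / ω) (𝓝[>] 0) (𝓝 (1 + ρ)) := by
    refine (hu.const_add 1).congr' ?_
    filter_upwards [self_mem_nhdsWithin] with ω hω
    rw [add_div, div_self (ne_of_gt hω)]
  have hne : ρ + ρ' ≠ 1 + ρ := fun h => hρ' (by linarith)
  have hslope : Tendsto (fun ω => (slope γ (u ω + v ω) (ω + u ω) - -m) / ω / m) (𝓝[>] 0)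
      (𝓝 (m₂ / 2 * (ρ + ρ' + (1 + ρ)) / m)) :=
    (tendsto_slope_sub_div tendsto_id hρρ' hρ hne ha hb (isLittleO_of_secondOrder hγ)).div_const m
  convert hslope using 2 with ω
  · rw [slope_def_field, show ω + u ω - (u ω + v ω) = ω - v ω by ring, sub_neg_eq_add,
      div_right_comm, add_div, div_self hm, div_div, ← neg_sub (γ (ω + u ω))]
    ring
  · field_simp
    ring

/-- Here `v` is the contribution `λ_2(1 - β_2)` of the tagged class, with load `ρ'`, and `u` is the
sum of `λ_i(1 - β_i)` over all other classes, with total load `ρ`. -/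
theorem stmt_16_general {γ σ u v : ℝ → ℝ} {s m m₂ ρ ρ' : ℝ} (hm : m ≠ 0) (hρ : 0 < 1 + ρ)
    (hρρ' : 0 < ρ + ρ') (hρ' : ρ' ≠ 1)
    (hu : Tendsto (fun ω => u ω / ω) (𝓝[>] 0) (𝓝 ρ))
    (hv : Tendsto (fun ω => v ω / ω) (𝓝[>] 0) (𝓝 ρ'))
    (hγ : Tendsto (fun ω => (γ ω - (1 - m * ω + m₂ * ω ^ 2 / 2)) / ω ^ 2) (𝓝[>] 0) (𝓝 0))
    (hσ : Tendsto (fun ω => (1 - σ ω) / ω) (𝓝[>] 0) (𝓝 s)) :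
    Tendsto (fun ω => 1 / ω * (1 - σ ω * (γ (u ω + v ω) - γ (ω + u ω)) / ((ω - v ω) * m)))
      (𝓝[>] 0) (𝓝 (s + (1 + 2 * ρ + ρ') * m₂ / (2 * m))) := by
  simpa only [id_eq, one_div_mul_eq_div, mul_div_assoc] using
    tendsto_one_sub_mul_div (tendsto_id'.2 nhdsWithin_le_nhds) hσ
      (tendsto_one_sub_gated_div hm hρ hρρ' hρ' hu hv hγ)

/-- Mean waiting time of a type-2 customer under globally gated service:
`E(W_2) = E(S_1) + (1 + 2ρ_H + 2ρ_L + ρ_2)·E(C²)/(2E(C))`. -/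
theorem stmt_16 (lH lL l2 EBH EBL EB2 EBH2 EBL2 EB22 ES1 EC EC2 ρH ρL ρ2 : ℝ)
    (hlH : 0 < lH) (hlL : 0 < lL) (hl2 : 0 < l2)
    (hEBH : 0 < EBH) (hEBL : 0 < EBL) (hEB2 : 0 < EB2)
    (hEBH2 : 0 ≤ EBH2) (hEBL2 : 0 ≤ EBL2) (hEB22 : 0 ≤ EB22)
    (hES1 : 0 < ES1) (hEC : 0 < EC) (hEC2 : 0 ≤ EC2)
    (hρH : ρH = lH * EBH) (hρL : ρL = lL * EBL) (hρ2 : ρ2 = l2 * EB2)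
    (hρ2lt : ρ2 < 1)
    (βH βL β2 γ σ1 : ℝ → ℝ)
    (hβH : Tendsto (fun ω => (βH ω - (1 - EBH * ω + EBH2 * ω ^ 2 / 2)) / ω ^ 2)
      (nhdsWithin 0 (Set.Ioi 0)) (nhds 0))
    (hβL : Tendsto (fun ω => (βL ω - (1 - EBL * ω + EBL2 * ω ^ 2 / 2)) / ω ^ 2)
      (nhdsWithin 0 (Set.Ioi 0)) (nhds 0))
    (hβ2 : Tendsto (fun ω => (β2 ω - (1 - EB2 * ω + EB22 * ω ^ 2 / 2)) / ω ^ 2)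
      (nhdsWithin 0 (Set.Ioi 0)) (nhds 0))
    (hγ : Tendsto (fun ω => (γ ω - (1 - EC * ω + EC2 * ω ^ 2 / 2)) / ω ^ 2)
      (nhdsWithin 0 (Set.Ioi 0)) (nhds 0))
    (hσ1 : Tendsto (fun ω => (σ1 ω - (1 - ES1 * ω)) / ω)
      (nhdsWithin 0 (Set.Ioi 0)) (nhds 0)) :
    Tendsto (fun ω => (1 / ω) * (1 - σ1 ω *
        (γ (lH * (1 - βH ω) + lL * (1 - βL ω) + l2 * (1 - β2 ω))
            - γ (ω + lH * (1 - βH ω) + lL * (1 - βL ω)))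
          / ((ω - l2 * (1 - β2 ω)) * EC)))
      (nhdsWithin 0 (Set.Ioi 0))
      (nhds (ES1 + (1 + 2 * ρH + 2 * ρL + ρ2) * EC2 / (2 * EC))) := by
  subst hρH hρL hρ2
  have hu : Tendsto (fun ω => (lH * (1 - βH ω) + lL * (1 - βL ω)) / ω) (𝓝[>] 0)
      (𝓝 (lH * EBH + lL * EBL)) := by
    simpa only [add_div] using (tendsto_mul_one_sub_div_of_secondOrder lH hβH).add
      (tendsto_mul_one_sub_div_of_secondOrder lL hβL)
  have hlim := stmt_16_general hEC.ne' (by positivity) (by positivity) hρ2lt.ne hu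
    (tendsto_mul_one_sub_div_of_secondOrder l2 hβ2) hγ (tendsto_one_sub_div_of_firstOrder hσ1)
  simpa only [mul_add (2 : ℝ), ← add_assoc] using hlim
end

section
/- Let λ_H, λ_L > 0, EB_H, EB_L > 0, EB_H2, EB_L2 ≥ 0, EI > 0, EI2 ≥ 0, ρ_H = λ_H·EB_H, ρ_L = λ_L·EB_L, ρ_1 = ρ_H + ρ_L with ρ_H < 1. Let β_H, β_L, Ĩ : ℝ → ℝ satisfy the second-order expansions (β_H(ω) − (1 − EB_H·ω + EB_H2·ω²/2))/ω² → 0, (β_L(ω) − (1 − EB_L·ω + EB_L2·ω²/2))/ω² → 0, and (Ĩ(ω) − (1 − EI·ω + EI2·ω²/2))/ω² → 0 as ω → 0⁺. Define F(ω) = ((1 − ρ_H)·ω/(ω − λ_H(1 − β_H(ω)))) · [ ((1 − ρ_1)/(1 − ρ_H))·(1 − Ĩ(ω))/(ω·EI) + (ρ_L/(1 − ρ_H))·(1 − β_L(ω))/(ω·EB_L) ]. Then (1 − F(ω))/ω → (ρ_H·EB_H2/(2·EB_H) + ρ_L·EB_L2/(2·EB_L))/(1 − ρ_H) + ((1 −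 ρ_1)/(1 − ρ_H))·EI2/(2·EI) as ω → 0⁺. -/
open Filter

/-!
By the Fuhrmann–Cooper decomposition, the waiting-time transform is the product of the transform of
an M/G/1 waiting time and of a mixture of residual-life transforms. Means add under products and
average under mixtures. The M/G/1 factor is the transform of a geometric sum of residual service
times, `(1 - ρ) / (1 - ρ * B_res)`, with mean `ρ / (1 - ρ) * E(B_res)`. Finally, a residual life has
mean `E(X ^ 2) / (2 * E(X))`, which is read off the second-order expansion of the transform of `X`.
-/

open scoped Topology

/-- The transform `G` encodes the mean `m`, that is, `G ω = 1 - m * ω + o(ω)` as `ω → 0⁺`. The value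
`G 0` does not enter, because the quotients defining queueing transforms are `0 / 0` there. -/
def HasTransformMean (G : ℝ → ℝ) (m : ℝ) : Prop :=
  Tendsto (fun ω => (1 - G ω) / ω) (𝓝[>] 0) (𝓝 m)

/-- The transform `β` encodes the first two moments `m` and `m₂`, that is,
`β ω = 1 - m * ω + m₂ * ω ^ 2 / 2 + o(ω ^ 2)` as `ω → 0⁺`. -/
def HasTransformMoments (β : ℝ → ℝ) (m m₂ : ℝ) : Prop :=
  Tendsto (fun ω => (β ω - (1 - m * ω + m₂ * ω ^ 2 / 2)) / ω ^ 2) (𝓝[>] 0) (𝓝 0)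

/-- The transform of the residual (equilibrium) life of a random variable with transform `β` and
mean `m`. The mean is a separate argument, as `β` is an arbitrary function. -/
noncomputable def residualTransform (β : ℝ → ℝ) (m ω : ℝ) : ℝ :=
  (1 - β ω) / (ω * m)

/-- The Pollaczek–Khinchine transform of the waiting time in an M/G/1 queue with arrival rate `l`,
mean service time `m` and service-time transform `β`. -/
noncomputable def waitingTransform (l m : ℝ) (β : ℝ → ℝ) (ω : ℝ) : ℝ :=
  (1 - l * m) * ω / (ω - l * (1 - β ω))

namespace HasTransformMean

variable {G K : ℝ → ℝ} {m k : ℝ}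

theorem congr' (hG : HasTransformMean G m) (hGK : G =ᶠ[𝓝[>] 0] K) : HasTransformMean K m :=
  Tendsto.congr' (hGK.mono fun ω hω => by rw [hω]) hG

theorem tendsto_one (hG : HasTransformMean G m) : Tendsto G (𝓝[>] 0) (𝓝 1) := by
  have hω : Tendsto (fun ω : ℝ => ω) (𝓝[>] 0) (𝓝 0) := tendsto_id.mono_left nhdsWithin_le_nhds
  have hlim : Tendsto (fun ω => 1 - ω * ((1 - G ω) / ω)) (𝓝[>] 0) (𝓝 1) := by
    simpa only [zero_mul, sub_zero] using (hω.mul hG).const_sub 1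
  refine hlim.congr' ?_
  filter_upwards [self_mem_nhdsWithin] with ω hpos
  rw [mul_div_cancel₀ _ (ne_of_gt hpos), sub_sub_cancel]

theorem mul (hG : HasTransformMean G m) (hK : HasTransformMean K k) :
    HasTransformMean (fun ω => G ω * K ω) (m + k) := by
  have hlim : Tendsto (fun ω => (1 - G ω) / ω + G ω * ((1 - K ω) / ω)) (𝓝[>] 0) (𝓝 (m + k)) := by
    simpa only [one_mul] using Tendsto.add hG (hG.tendsto_one.mul hK)
  exact hlim.congr fun ω => by ring

theorem mixture (hG : HasTransformMean G m) (hK : HasTransformMean K k) {a b : ℝ}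
    (hab : a + b = 1) : HasTransformMean (fun ω => a * G ω + b * K ω) (a * m + b * k) := by
  have hlim := (Tendsto.const_mul a hG).add (Tendsto.const_mul b hK)
  exact hlim.congr fun ω => by linear_combination hab / ω

theorem geometric_sum (hG : HasTransformMean G m) {ρ : ℝ} (hρ : ρ ≠ 1) :
    HasTransformMean (fun ω => (1 - ρ) / (1 - ρ * G ω)) (ρ / (1 - ρ) * m) := by
  have hρ' : 1 - ρ ≠ 0 := sub_ne_zero.mpr hρ.symm
  have hden : Tendsto (fun ω => 1 - ρ * G ω) (𝓝[>] 0) (𝓝 (1 - ρ)) := by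
    simpa only [mul_one] using (hG.tendsto_one.const_mul ρ).const_sub 1
  have hlim := (Tendsto.const_mul ρ hG).div hden hρ'
  rw [HasTransformMean, div_mul_eq_mul_div]
  refine hlim.congr' ?_
  filter_upwards [hden.eventually_ne hρ'] with ω hω
  rw [Pi.div_apply, one_sub_div hω]
  ring

end HasTransformMean

section SecondOrderExpansion

variable {β : ℝ → ℝ} {m m₂ : ℝ}

theorem HasTransformMoments.hasTransformMean_residualTransform (hβ : HasTransformMoments β m m₂)
    (hm : m ≠ 0) : HasTransformMean (residualTransform β m) (m₂ / (2 * m)) := by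
  have hlim := (Tendsto.add_const (m₂ / 2) hβ).div_const m
  rw [zero_add, div_div] at hlim
  refine hlim.congr' ?_
  filter_upwards [self_mem_nhdsWithin] with ω hpos
  have hω : ω ≠ 0 := ne_of_gt hpos
  rw [residualTransform]
  field_simp
  ring

theorem waitingTransform_eq_geometric_sum (l : ℝ) (hm : m ≠ 0) {ω : ℝ} (hω : ω ≠ 0) :
    waitingTransform l m β ω = (1 - l * m) / (1 - l * m * residualTransform β m ω) := by
  have hden : ω - l * (1 - β ω) = (1 - l * m * residualTransform β m ω) * ω := by
    rw [residualTransform]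
    field_simp
  rw [waitingTransform, hden, mul_div_mul_right _ _ hω]

theorem HasTransformMoments.hasTransformMean_waitingTransform (hβ : HasTransformMoments β m m₂)
    (hm : m ≠ 0) {l : ℝ} (hρ : l * m ≠ 1) :
    HasTransformMean (waitingTransform l m β) (l * m / (1 - l * m) * (m₂ / (2 * m))) := by
  refine ((hβ.hasTransformMean_residualTransform hm).geometric_sum hρ).congr' ?_
  filter_upwards [self_mem_nhdsWithin] with ω hpos
  exact (waitingTransform_eq_geometric_sum l hm (ne_of_gt hpos)).symm

end SecondOrderExpansion

theorem stmt_17_general {lH lL EBH EBL EBH2 EBL2 EI EI2 : ℝ} {βH βL Itilde : ℝ → ℝ}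
    (hEBH : EBH ≠ 0) (hEBL : EBL ≠ 0) (hEI : EI ≠ 0) (hρH : lH * EBH ≠ 1)
    (hβH : HasTransformMoments βH EBH EBH2) (hβL : HasTransformMoments βL EBL EBL2)
    (hItilde : HasTransformMoments Itilde EI EI2) :
    HasTransformMean
      (fun ω => waitingTransform lH EBH βH ω *
        ((1 - (lH * EBH + lL * EBL)) / (1 - lH * EBH) * residualTransform Itilde EI ω +
          lL * EBL / (1 - lH * EBH) * residualTransform βL EBL ω))
      ((lH * EBH * EBH2 / (2 * EBH) + lL * EBL * EBL2 / (2 * EBL)) / (1 - lH * EBH) +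
        (1 - (lH * EBH + lL * EBL)) / (1 - lH * EBH) * (EI2 / (2 * EI))) := by
  have hweights :
      (1 - (lH * EBH + lL * EBL)) / (1 - lH * EBH) + lL * EBL / (1 - lH * EBH) = 1 := by
    rw [← add_div, sub_add_eq_sub_sub, sub_add_cancel, div_self (sub_ne_zero.mpr hρH.symm)]
  have hmixture := (hItilde.hasTransformMean_residualTransform hEI).mixture
    (hβL.hasTransformMean_residualTransform hEBL) hweights
  convert (hβH.hasTransformMean_waitingTransform hEBH hρH).mul hmixture using 1
  ring

/-- Mean waiting time of a high-priority customer under exhaustive service in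
intervisit form: `E(W_H) = (ρ_H E(B_H²)/(2E(B_H)) + ρ_L E(B_L²)/(2E(B_L)))/(1−ρ_H)
+ ((1−ρ_1)/(1−ρ_H))·E(I²)/(2E(I))`. -/
theorem stmt_17 (lH lL EBH EBL EBH2 EBL2 EI EI2 ρH ρL ρ1 : ℝ)
    (hlH : 0 < lH) (hlL : 0 < lL) (hEBH : 0 < EBH) (hEBL : 0 < EBL)
    (hEBH2 : 0 ≤ EBH2) (hEBL2 : 0 ≤ EBL2) (hEI : 0 < EI) (hEI2 : 0 ≤ EI2)
    (hρH : ρH = lH * EBH) (hρL : ρL = lL * EBL) (hρ1 : ρ1 = ρH + ρL)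
    (hρHlt : ρH < 1)
    (βH βL Itilde : ℝ → ℝ)
    (hβH : Tendsto (fun ω => (βH ω - (1 - EBH * ω + EBH2 * ω ^ 2 / 2)) / ω ^ 2)
      (nhdsWithin 0 (Set.Ioi 0)) (nhds 0))
    (hβL : Tendsto (fun ω => (βL ω - (1 - EBL * ω + EBL2 * ω ^ 2 / 2)) / ω ^ 2)
      (nhdsWithin 0 (Set.Ioi 0)) (nhds 0))
    (hItilde : Tendsto (fun ω => (Itilde ω - (1 - EI * ω + EI2 * ω ^ 2 / 2)) / ω ^ 2)
      (nhdsWithin 0 (Set.Ioi 0)) (nhds 0)) :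
    Tendsto (fun ω => (1 -
        ((1 - ρH) * ω / (ω - lH * (1 - βH ω)))
          * ((1 - ρ1) / (1 - ρH) * ((1 - Itilde ω) / (ω * EI))
            + ρL / (1 - ρH) * ((1 - βL ω) / (ω * EBL)))) / ω)
      (nhdsWithin 0 (Set.Ioi 0))
      (nhds ((ρH * EBH2 / (2 * EBH) + ρL * EBL2 / (2 * EBL)) / (1 - ρH)
        + (1 - ρ1) / (1 - ρH) * (EI2 / (2 * EI)))) := by
  subst hρH hρL hρ1
  exact stmt_17_general hEBH.ne' hEBL.ne' hEI.ne' hρHlt.ne hβH hβL hItilde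
end
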